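/- Suppose X_i, X_{i+1}, X_{i+2} are each non-empty for some i. If |X_j| ≥ 3 for some j ∈ {i, i+1, i+2}, then |X_k| = |X_ℓ| = 1 where {j, k, ℓ} = {i, i+1, i+2}. -/

import Mathlib

open SimpleGraph

/-- The claw `K_{1,3}`: vertex 0 adjacent to 1, 2, 3. -/
def claw : SimpleGraph (Fin 4) := SimpleGraph.fromRel (fun a _ => a = 0)

/-- `4K_1`: the edgeless graph on four vertices. -/
def fourK1 : SimpleGraph (Fin 4) := ⊥

/-- `K_5 - e`: the complete graph on five vertices minus the edge {0,1}. -/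
def K5e : SimpleGraph (Fin 5) :=
  SimpleGraph.fromRel (fun a b => ¬(a = 0 ∧ b = 1) ∧ ¬(a = 1 ∧ b = 0))

/-- The 5-wheel: the cycle 0-1-2-3-4-0 together with hub 5 adjacent to all. -/
def wheel5 : SimpleGraph (Fin 6) :=
  SimpleGraph.fromRel (fun a b =>
    (a ≠ 5 ∧ b ≠ 5 ∧ b.val = (a.val + 1) % 5) ∨ a = 5 ∨ b = 5)

/-- The `C_5`-twin: the cycle 0-1-2-3-4-0 together with vertex 5, a true twin
of vertex 0 (adjacent to 0, 1 and 4). -/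
def C5twin : SimpleGraph (Fin 6) :=
  SimpleGraph.fromRel (fun a b =>
    (a ≠ 5 ∧ b ≠ 5 ∧ b.val = (a.val + 1) % 5) ∨ (a = 5 ∧ (b = 0 ∨ b = 1 ∨ b = 4)))

/-- The `P_5`-twin: the path 0-1-2-3-4 together with vertex 5, a true twin of
the middle vertex 2 (adjacent to 1, 2 and 3). -/
def P5twin : SimpleGraph (Fin 6) :=
  SimpleGraph.fromRel (fun a b =>
    (a ≠ 5 ∧ b ≠ 5 ∧ b.val = a.val + 1) ∨ (a = 5 ∧ (b = 1 ∨ b = 2 ∨ b = 3)))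

/-- The chordless cycle on seven vertices. -/
def C7 : SimpleGraph (Fin 7) :=
  SimpleGraph.fromRel (fun a b => b.val = (a.val + 1) % 7)

/-- `G` is `H`-free: `G` contains no induced subgraph isomorphic to `H`,
i.e. there is no graph embedding of `H` into `G`. -/
def Free {V W : Type*} (G : SimpleGraph V) (H : SimpleGraph W) : Prop :=
  IsEmpty (H ↪g G)

/-- `X_i`: vertices outside the five-cycle `v 0, …, v 4` whose neighbours on the
cycle are exactly `v i` and `v (i+1)`. -/
def cycX {V : Type*} (G : SimpleGraph V) (v : ZMod 5 → V) (i : ZMod 5) : Set V :=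
  {w | w ∉ Set.range v ∧ ∀ j : ZMod 5, G.Adj w (v j) ↔ (j = i ∨ j = i + 1)}

/-- `Y_i`: vertices outside the five-cycle whose neighbours on the cycle are
exactly `v i, v (i+1), v (i+2), v (i+3)`. -/
def cycY {V : Type*} (G : SimpleGraph V) (v : ZMod 5 → V) (i : ZMod 5) : Set V :=
  {w | w ∉ Set.range v ∧
    ∀ j : ZMod 5, G.Adj w (v j) ↔ (j = i ∨ j = i + 1 ∨ j = i + 2 ∨ j = i + 3)}

/-- `R`: vertices outside the five-cycle with no neighbour on the cycle. -/
def cycR {V : Type*} (G : SimpleGraph V) (v : ZMod 5 → V) : Set V :=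
  {w | w ∉ Set.range v ∧ ∀ j : ZMod 5, ¬ G.Adj w (v j)}

/-!
Each `X_p` is a clique, since `G` is claw-free. Two vertices of `X_p` with a common neighbour
`z ∈ X_q`, `q ≠ p`, would produce a `K_5 - e` if `p` and `q` are consecutive, and a `C_5`-twin on a
rerouted five-cycle otherwise; so `z` has at most one neighbour in `X_p`. One vertex from each of
`X_i`, `X_{i+1}`, `X_{i+2}`, together with `v_{i-1}`, is not a `4K_1`. Hence if `b ∈ X_k` and
`c ∈ X_l` are not adjacent, every vertex of `X_j` is adjacent to `b` or `c`, and `|X_j| ≤ 2`.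
If `|X_j| ≥ 3`, a vertex `c ∈ X_l` is therefore adjacent to all of `X_k`, and `|X_k| ≤ 1`.
-/

section ForbiddenSubgraphs

variable {V W : Type*} {G : SimpleGraph V}

theorem not_free_of_forall_lt [LinearOrder W] {H : SimpleGraph W} (f : W → V)
    (hf : ∀ a b, a < b → f a ≠ f b ∧ (G.Adj (f a) (f b) ↔ H.Adj a b)) : ¬ _root_.Free G H := by
  have hinj : Function.Injective f := .of_lt_imp_ne fun a b hab => (hf a b hab).1
  refine fun hfree => hfree.false ⟨⟨f, hinj⟩, fun {a b} => ?_⟩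
  rcases lt_trichotomy a b with hab | rfl | hba
  · exact (hf a b hab).2
  · simp
  · rw [G.adj_comm, H.adj_comm]
    exact (hf b a hba).2

theorem adj_of_free_claw (hclaw : _root_.Free G claw) {a b c d : V} (hab : G.Adj a b)
    (hac : G.Adj a c) (had : G.Adj a d) (hbc : ¬ G.Adj b c) (hbd : ¬ G.Adj b d)
    (hbc' : b ≠ c) (hbd' : b ≠ d) (hcd : c ≠ d) : G.Adj c d := by
  by_contra hncd
  refine not_free_of_forall_lt ![a, b, c, d] ?_ hclaw
  simp [Fin.forall_fin_succ, claw, hab.ne, hac.ne, had.ne, *]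

theorem adj_of_free_K5e (hK5e : _root_.Free G K5e) {a b c d e : V} (hab : a ≠ b)
    (hac : G.Adj a c) (had : G.Adj a d) (hae : G.Adj a e)
    (hbc : G.Adj b c) (hbd : G.Adj b d) (hbe : G.Adj b e)
    (hcd : G.Adj c d) (hce : G.Adj c e) (hde : G.Adj d e) : G.Adj a b := by
  by_contra hnab
  refine not_free_of_forall_lt ![a, b, c, d, e] ?_ hK5e
  simp [Fin.forall_fin_succ, K5e, hac.ne, had.ne, hae.ne, hbc.ne, hbd.ne, hbe.ne, hcd.ne, hce.ne,
    hde.ne, *]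

theorem indepSetFree_of_free_bot {n : ℕ} (h : _root_.Free G (⊥ : SimpleGraph (Fin n))) :
    G.IndepSetFree n := by
  classical
  intro t ht
  let e : Fin n ↪ V := (t.equivFinOfCardEq ht.card_eq).symm.toEmbedding.trans (.subtype _)
  refine not_free_of_forall_lt e (fun a b hab => ?_) h
  have hne := e.injective.ne hab.ne
  exact ⟨hne, iff_of_false (ht.isIndepSet (by simp [e]) (by simp [e]) hne) (by simp)⟩

theorem C5twin_adj_castSucc : ∀ a b : Fin 5, C5twin.Adj a.castSucc b.castSucc ↔
    ((b.val : ZMod 5) = a.val + 1 ∨ (a.val : ZMod 5) = b.val + 1) := by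
  simp only [C5twin, fromRel_adj]
  decide

theorem C5twin_adj_castSucc_last : ∀ a : Fin 5, C5twin.Adj a.castSucc (Fin.last 5) ↔
    ((a.val : ZMod 5) = -1 ∨ (a.val : ZMod 5) = 0 ∨ (a.val : ZMod 5) = 1) := by
  simp only [C5twin, fromRel_adj]
  decide

end ForbiddenSubgraphs

section FiveCycle

variable {V : Type*} {G : SimpleGraph V} {v : ZMod 5 → V} {p q : ZMod 5} {x y z : V}

theorem zmod_five_cases (p i : ZMod 5) :
    i = p ∨ i = p + 1 ∨ i = p + 2 ∨ i = p + 3 ∨ i = p + 4 := by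
  decide +revert

/-- The vertices `v 0, …, v 4` induce a five-cycle in `G`, in this cyclic order. -/
def IsInducedFiveCycle (G : SimpleGraph V) (v : ZMod 5 → V) : Prop :=
  ∀ i j : ZMod 5, G.Adj (v i) (v j) ↔ (j = i + 1 ∨ i = j + 1)

namespace IsInducedFiveCycle

theorem of_adj_of_not_adj (hadj : ∀ i, G.Adj (v i) (v (i + 1)))
    (hnadj : ∀ i, ¬ G.Adj (v i) (v (i + 2))) : IsInducedFiveCycle G v := by
  intro i j
  have hij : j = i ∨ j = i + 1 ∨ i = j + 1 ∨ j = i + 2 ∨ i = j + 2 := by decide +revert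
  rcases hij with rfl | rfl | rfl | rfl | rfl
  · exact iff_of_false G.irrefl (by decide +revert)
  · exact iff_of_true (hadj i) (.inl rfl)
  · exact iff_of_true (hadj j).symm (.inr rfl)
  · exact iff_of_false (hnadj i) (by decide +revert)
  · exact iff_of_false (fun h => hnadj j h.symm) (by decide +revert)

-- The edge `x z` replaces `v (p + 1)`, `v (p + 2)`; any other `y ∈ cycX G v p` adjacent to `z` is
-- then a true twin of `x`.
theorem update_update (hv : IsInducedFiveCycle G v) (hx : x ∈ cycX G v p)
    (hz : z ∈ cycX G v (p + 2)) (hxz : G.Adj x z) :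
    IsInducedFiveCycle G (Function.update (Function.update v (p + 1) x) (p + 2) z) := by
  have hvx := hx.2
  have hvz := hz.2
  apply of_adj_of_not_adj <;> intro i <;>
    rcases zmod_five_cases p i with rfl | rfl | rfl | rfl | rfl <;>
    grind [Function.update_apply, SimpleGraph.adj_comm, IsInducedFiveCycle]

theorem injective (hv : IsInducedFiveCycle G v) : Function.Injective v := by
  intro i j hij
  have hnbr : ∀ k, (k = i + 1 ∨ i = k + 1) ↔ (k = j + 1 ∨ j = k + 1) := fun k => by
    rw [← hv, ← hv, hij]
  clear hij
  decide +revert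

theorem not_forall_adj_iff (hv : IsInducedFiveCycle G v) (hC5t : _root_.Free G C5twin)
    (p : ZMod 5) (t : V) : ¬ ∀ j, G.Adj t (v j) ↔ (j = p - 1 ∨ j = p ∨ j = p + 1) := by
  intro ht
  have hne : ∀ j, v j ≠ t := by
    rintro j rfl
    have hnbr : ∀ k, (k = j + 1 ∨ j = k + 1) ↔ (k = p - 1 ∨ k = p ∨ k = p + 1) :=
      fun k => (hv j k).symm.trans (ht k)
    clear * - hnbr
    revert j p
    decide
  refine not_free_of_forall_lt (Fin.snoc (α := fun _ => V) (fun a : Fin 5 => v (p + a.val)) t)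
    (fun a b hab => ?_) hC5t
  induction b using Fin.lastCases with
  | last =>
    induction a using Fin.lastCases with
    | last => exact absurd hab (lt_irrefl _)
    | cast a =>
      rw [Fin.snoc_castSucc, Fin.snoc_last, G.adj_comm, ht, C5twin_adj_castSucc_last]
      exact ⟨hne _, by grind⟩
  | cast b =>
    induction a using Fin.lastCases with
    | last => exact absurd hab (Fin.le_last _).not_gt
    | cast a =>
      have hval : (a.val : ZMod 5) ≠ b.val := by decide +revert
      rw [Fin.snoc_castSucc, Fin.snoc_castSucc, hv, C5twin_adj_castSucc]
      exact ⟨hv.injective.ne (by grind), by grind⟩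

theorem comp_neg (hv : IsInducedFiveCycle G v) : IsInducedFiveCycle G (fun i => v (-i)) := by
  intro i j
  rw [hv]
  grind

end IsInducedFiveCycle

theorem cycX_comp_neg (G : SimpleGraph V) (v : ZMod 5 → V) (p : ZMod 5) :
    cycX G (fun i => v (-i)) (-(p + 1)) = cycX G v p := by
  ext w
  have hrange : Set.range (fun i => v (-i)) = Set.range v := neg_surjective.range_comp v
  have hadj : (∀ j, G.Adj w (v (-j)) ↔ (j = -(p + 1) ∨ j = -(p + 1) + 1)) ↔
      ∀ j, G.Adj w (v j) ↔ (j = p ∨ j = p + 1) :=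
    (Equiv.neg _).forall_congr fun {j} => iff_congr .rfl (by rw [Equiv.neg_apply]; grind)
  simp only [cycX, Set.mem_ofPred_eq, hrange, hadj]

theorem pairwise_disjoint_cycX (G : SimpleGraph V) (v : ZMod 5 → V) :
    Pairwise (Function.onFun Disjoint (cycX G v)) := by
  intro p q hpq
  refine Set.disjoint_left.2 fun w hp hq => hpq ?_
  have hmem : ∀ j, (j = p ∨ j = p + 1) ↔ (j = q ∨ j = q + 1) := fun j => by rw [← hp.2, hq.2]
  clear hp hq hpq
  decide +revert

theorem adj_iff_of_mem_cycX (hx : x ∈ cycX G v p) (j : ZMod 5) :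
    G.Adj (v j) x ↔ (j = p ∨ j = p + 1) := by
  rw [G.adj_comm, hx.2]

theorem ne_of_mem_cycX (hx : x ∈ cycX G v p) (j : ZMod 5) : v j ≠ x :=
  fun h => hx.1 ⟨j, h⟩

theorem isClique_cycX (hclaw : _root_.Free G claw) (hv : IsInducedFiveCycle G v) (p : ZMod 5) :
    G.IsClique (cycX G v p) := by
  intro x hx y hy hxy
  have hprev : ∀ {w}, w ∈ cycX G v p → ¬ G.Adj (v (p - 1)) w := fun hw => by
    rw [adj_iff_of_mem_cycX hw]
    grind
  exact adj_of_free_claw hclaw ((hv p (p - 1)).2 (.inr (by ring)))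
    ((adj_iff_of_mem_cycX hx p).2 (.inl rfl)) ((adj_iff_of_mem_cycX hy p).2 (.inl rfl))
    (hprev hx) (hprev hy) (ne_of_mem_cycX hx _) (ne_of_mem_cycX hy _) hxy

theorem subsingleton_cycX_inter_neighborSet_of_add_one (hclaw : _root_.Free G claw)
    (hK5e : _root_.Free G K5e) (hv : IsInducedFiveCycle G v) (hz : z ∈ cycX G v (p + 1)) :
    (cycX G v p ∩ G.neighborSet z).Subsingleton := by
  rintro x ⟨hx, hzx⟩ y ⟨hy, hzy⟩
  by_contra hxy
  have hpz : ¬ G.Adj (v p) z := by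
    rw [adj_iff_of_mem_cycX hz]
    grind
  refine hpz <| adj_of_free_K5e hK5e (c := v (p + 1)) (ne_of_mem_cycX hz p)
    ((hv _ _).2 (.inl rfl)) ((adj_iff_of_mem_cycX hx _).2 (.inl rfl))
    ((adj_iff_of_mem_cycX hy _).2 (.inl rfl)) ((hz.2 _).2 (.inl rfl)) hzx hzy
    ((adj_iff_of_mem_cycX hx _).2 (.inr rfl)) ((adj_iff_of_mem_cycX hy _).2 (.inr rfl))
    (isClique_cycX hclaw hv p hx hy hxy)

theorem subsingleton_cycX_inter_neighborSet_of_add_two (hclaw : _root_.Free G claw)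
    (hC5t : _root_.Free G C5twin) (hv : IsInducedFiveCycle G v) (hz : z ∈ cycX G v (p + 2)) :
    (cycX G v p ∩ G.neighborSet z).Subsingleton := by
  rintro x ⟨hx, hzx⟩ y ⟨hy, hzy⟩
  by_contra hxy
  have hyx : G.Adj y x := isClique_cycX hclaw hv p hy hx (Ne.symm hxy)
  have hyz : G.Adj y z := hzy.symm
  refine (hv.update_update hx hz hzx.symm).not_forall_adj_iff hC5t (p + 1) y fun j => ?_
  have hyv := hy.2
  rcases zmod_five_cases p j with rfl | rfl | rfl | rfl | rfl <;> grind [Function.update_apply]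

theorem subsingleton_cycX_inter_neighborSet (hclaw : _root_.Free G claw)
    (hK5e : _root_.Free G K5e) (hC5t : _root_.Free G C5twin) (hv : IsInducedFiveCycle G v)
    (hpq : p ≠ q) (hz : z ∈ cycX G v q) : (cycX G v p ∩ G.neighborSet z).Subsingleton := by
  rcases zmod_five_cases p q with rfl | rfl | rfl | rfl | rfl
  · exact absurd rfl hpq
  · exact subsingleton_cycX_inter_neighborSet_of_add_one hclaw hK5e hv hz
  · exact subsingleton_cycX_inter_neighborSet_of_add_two hclaw hC5t hv hz
  -- Reversing the cycle turns `q = p + 3` and `q = p + 4` into the two previous cases.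
  · rw [← cycX_comp_neg] at hz ⊢
    refine subsingleton_cycX_inter_neighborSet_of_add_two hclaw hC5t hv.comp_neg ?_
    convert hz using 2
    grind
  · rw [← cycX_comp_neg] at hz ⊢
    refine subsingleton_cycX_inter_neighborSet_of_add_one hclaw hK5e hv.comp_neg ?_
    convert hz using 2
    grind

theorem adj_or_adj_or_adj_of_mem_cycX {r i : ZMod 5} (hα : G.IndepSetFree 4)
    (hpq : p ≠ q) (hpr : p ≠ r) (hqr : q ≠ r)
    (hx : x ∈ cycX G v p) (hy : y ∈ cycX G v q) (hz : z ∈ cycX G v r)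
    (hix : ¬ G.Adj x (v i)) (hiy : ¬ G.Adj y (v i)) (hiz : ¬ G.Adj z (v i)) :
    G.Adj y z ∨ G.Adj x y ∨ G.Adj x z := by
  classical
  by_contra! hnadj
  have hxy := (pairwise_disjoint_cycX G v hpq).ne_of_mem hx hy
  have hxz := (pairwise_disjoint_cycX G v hpr).ne_of_mem hx hz
  have hyz := (pairwise_disjoint_cycX G v hqr).ne_of_mem hy hz
  have hxi := (ne_of_mem_cycX hx i).symm
  have hyi := (ne_of_mem_cycX hy i).symm
  have hzi := (ne_of_mem_cycX hz i).symm
  refine hα {x, y, z, v i} ⟨?_, ?_⟩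
  · simp [isIndepSet_iff, Set.pairwise_insert, *, G.adj_comm y x, G.adj_comm z x,
      G.adj_comm z y, G.adj_comm (v i) x, G.adj_comm (v i) y, G.adj_comm (v i) z]
  · simp [*]

end FiveCycle

section Counting

variable {V : Type*} {G : SimpleGraph V}

theorem encard_le_two_of_subset_union_neighborSet {A : Set V} {b c : V}
    (hb : (A ∩ G.neighborSet b).Subsingleton) (hc : (A ∩ G.neighborSet c).Subsingleton)
    (hA : A ⊆ G.neighborSet b ∪ G.neighborSet c) : A.encard ≤ 2 := by
  calc A.encard = ((A ∩ G.neighborSet b) ∪ (A ∩ G.neighborSet c)).encard := by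
        rw [← Set.inter_union_distrib_left, Set.inter_eq_left.2 hA]
    _ ≤ (A ∩ G.neighborSet b).encard + (A ∩ G.neighborSet c).encard := Set.encard_union_le _ _
    _ ≤ 1 + 1 := add_le_add (Set.encard_le_one_iff_subsingleton.2 hb)
        (Set.encard_le_one_iff_subsingleton.2 hc)
    _ = 2 := one_add_one_eq_two

theorem subsingleton_of_three_le_encard {A B : Set V} {c : V} (hA : 3 ≤ A.encard)
    (hAB : ∀ b ∈ B, (A ∩ G.neighborSet b).Subsingleton)
    (hAc : (A ∩ G.neighborSet c).Subsingleton) (hBc : (B ∩ G.neighborSet c).Subsingleton)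
    (hadj : ∀ a ∈ A, ∀ b ∈ B, G.Adj b c ∨ G.Adj a b ∨ G.Adj a c) : B.Subsingleton := by
  have hB : B ⊆ G.neighborSet c := by
    intro b hb
    by_contra hcb
    have hcover : A ⊆ G.neighborSet b ∪ G.neighborSet c := fun a ha =>
      ((hadj a ha b hb).resolve_left (mt G.adj_symm hcb)).imp G.adj_symm G.adj_symm
    have hle := encard_le_two_of_subset_union_neighborSet (hAB b hb) hAc hcover
    exact absurd (hA.trans hle) (by norm_num)
  rwa [Set.inter_eq_left.2 hB] at hBc

end Counting

theorem stmt_16_general {V : Type*} (G : SimpleGraph V)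
    (hclaw : _root_.Free G claw) (h4K1 : _root_.Free G fourK1) (hK5e : _root_.Free G K5e)
    (hC5t : _root_.Free G C5twin) (v : ZMod 5 → V)
    (hC : ∀ i j : ZMod 5, G.Adj (v i) (v j) ↔ (j = i + 1 ∨ i = j + 1))
    (i : ZMod 5)
    (hne : ∀ m ∈ ({i, i + 1, i + 2} : Set (ZMod 5)), (cycX G v m).Nonempty)
    (j : ZMod 5) (hj : j ∈ ({i, i + 1, i + 2} : Set (ZMod 5)))
    (hbig : 3 ≤ (cycX G v j).encard) :
    ∀ k ∈ ({i, i + 1, i + 2} : Set (ZMod 5)), k ≠ j → (cycX G v k).encard = 1 := by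
  intro k hk hkj
  obtain ⟨l, hl, hlj, hlk⟩ : ∃ l ∈ ({i, i + 1, i + 2} : Set (ZMod 5)), l ≠ j ∧ l ≠ k := by
    simp only [Set.mem_insert_iff, Set.mem_singleton_iff] at hj hk ⊢
    -- The three indices sum to `3 * i + 3`.
    refine ⟨3 * i + 3 - j - k, ?_⟩
    grind
  obtain ⟨c, hc⟩ := hne l hl
  have hunique {p q} (hpq : p ≠ q) {z} (hz : z ∈ cycX G v q) :=
    subsingleton_cycX_inter_neighborSet hclaw hK5e hC5t hC hpq hz
  have hmiss {m w} (hm : m ∈ ({i, i + 1, i + 2} : Set (ZMod 5))) (hw : w ∈ cycX G v m) :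
      ¬ G.Adj w (v (i - 1)) := by
    rw [hw.2]
    simp only [Set.mem_insert_iff, Set.mem_singleton_iff] at hm
    clear * - hm
    revert i m
    decide
  suffices (cycX G v k).Subsingleton from
    (Set.encard_le_one_iff_subsingleton.2 this).antisymm
      (Set.one_le_encard_iff_nonempty.2 (hne k hk))
  refine subsingleton_of_three_le_encard hbig (fun b hb => hunique hkj.symm hb)
    (hunique hlj.symm hc) (hunique hlk.symm hc) fun a ha b hb => ?_
  exact adj_or_adj_or_adj_of_mem_cycX (indepSetFree_of_free_bot h4K1) hkj.symm hlj.symm hlk.symm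
    ha hb hc (hmiss hj ha) (hmiss hk hb) (hmiss hl hc)

theorem stmt_16     {V : Type*} [Fintype V] (G : SimpleGraph V)
    (hconn : G.Connected)
    (hclaw : _root_.Free G claw) (h4K1 : _root_.Free G fourK1) (hK5e : _root_.Free G K5e)
    (hW5 : _root_.Free G wheel5) (hC5t : _root_.Free G C5twin) (hP5t : _root_.Free G P5twin)
    (v : ZMod 5 → V) (hv : Function.Injective v)
    (hC : ∀ i j : ZMod 5, G.Adj (v i) (v j) ↔ (j = i + 1 ∨ i = j + 1))
    (i : ZMod 5)
    (hne : (cycX G v i).Nonempty ∧ (cycX G v (i + 1)).Nonempty ∧ (cycX G v (i + 2)).Nonempty)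
    (j : ZMod 5) (hj : j ∈ ({i, i + 1, i + 2} : Set (ZMod 5)))
    (hbig : 3 ≤ (cycX G v j).ncard) :
    ∀ k ∈ ({i, i + 1, i + 2} : Set (ZMod 5)), k ≠ j → (cycX G v k).ncard = 1 := by
  have hcast (m) : ((cycX G v m).ncard : ℕ∞) = (cycX G v m).encard := Set.coe_ncard_eq_encard _
  simpa only [← hcast, Nat.cast_eq_one] using stmt_16_general G hclaw h4K1 hK5e hC5t v hC i
    (by simpa using hne) j hj (by rw [← hcast]; exact_mod_cast hbig)
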